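/- Let k be an algebraically closed field of characteristic 2, a ∈ k, a ≠ 0, a^7 ≠ 1, and let A = k[t,x,y]/(y^2 + y + t x^4 + (t+a^4)^7). Suppose σ is a k-algebra automorphism of A of the form t ↦ c1 t, x ↦ d1(t) x + d2(t), y ↦ e1(t,x) y + e2(t,x) with c1 ≠ 0, d1(t) ≢ 0, e1(t,x) ≢ 0. Then c1 = 1, d1 = 1, d2 = 0, e1 = 1, and e2 ∈ {0, 1}; i.e., the group of such automorphisms is Z/2Z, generated by y ↦ y + 1. -/

import Mathlib

open MvPolynomial

/-- The coordinate ring `A = k[t,x,y]/(y² + y + tx⁴ + (t+a⁴)⁷)` of the affine model of a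
supersingular Enriques surface of type `E₇+A₁`, with `t = X 0`, `x = X 1`, `y = X 2`. -/
noncomputable abbrev E7A1Ring (k : Type*) [Field k] (a : k) :=
  MvPolynomial (Fin 3) k ⧸ Ideal.span
    {(X 2 : MvPolynomial (Fin 3) k) ^ 2 + X 2 + X 0 * X 1 ^ 4 + (X 0 + C (a ^ 4)) ^ 7}

/-!
Write `b = a⁴` and `P = (t + b)⁷`. Comparing coefficients in the basis `1, y` of `A` over `k[t,x]`,
the substituted equation gives `e₁ = 1` and an Artin–Schreier equation
`e₂² + e₂ = t x⁴ + P(t) + c₁ t (d₁ x + d₂)⁴ + P(c₁ t)` in `k[t,x]`.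

The coefficient of `x⁴` shows that `t (1 + c₁ d₁⁴)` is a square. In characteristic 2 squares and
`1 + c₁ d₁⁴` have zero derivative, so `1 + c₁ d₁⁴ = 0`, and `e₂` is a polynomial in `t` with
`e₂² + e₂ = c₁ t d₂⁴ + P(t) + P(c₁ t)`. The left side has even degree, which forces `deg e₂ ≤ 3`,
and then the coefficients of `t⁷`, `t⁶` and `t³` give `c₁⁷ = 1` and `(b + b⁸) (1 + c₁⁶) = 0`,
whence `c₁ = 1`. What is left is `e₂² + e₂ = t d₂⁴`, where parity of the degree gives `d₂ = 0`.
-/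

section CharP

open scoped Polynomial

variable {R : Type*} [CommRing R] (p : ℕ)

theorem coeff_pow_expChar_pow_of_not_dvd [ExpChar R p] (f : R[X]) {m n : ℕ} (h : ¬p ^ m ∣ n) :
    (f ^ p ^ m).coeff n = 0 := by
  have hp : 0 < p ^ m := pow_pos (expChar_pos R p) m
  rw [← Polynomial.map_iterateFrobenius_expand, Polynomial.coeff_map,
    Polynomial.coeff_expand hp, if_neg h, map_zero]

theorem derivative_pow_char [CharP R p] (f : R[X]) : Polynomial.derivative (f ^ p) = 0 := by
  rw [Polynomial.derivative_pow, CharP.cast_eq_zero, map_zero, zero_mul, zero_mul]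

theorem eq_zero_of_pow_char_eq_X_mul [CharP R p] {f u : R[X]} (h : f ^ p = Polynomial.X * u)
    (hu : Polynomial.derivative u = 0) : u = 0 := by
  have hder := congrArg Polynomial.derivative h
  rw [derivative_pow_char, Polynomial.derivative_mul, hu, Polynomial.derivative_X] at hder
  simpa only [one_mul, mul_zero, add_zero] using hder.symm

end CharP

section Degree

open scoped Polynomial

variable {R : Type*} [CommRing R] [NoZeroDivisors R]

theorem natDegree_sq_add_self (s : R[X]) : (s ^ 2 + s).natDegree = 2 * s.natDegree := by
  rcases Nat.eq_zero_or_pos s.natDegree with hs | hs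
  · obtain ⟨r, rfl⟩ := Polynomial.natDegree_eq_zero.1 hs
    rw [← Polynomial.C_pow, ← Polynomial.C_add, Polynomial.natDegree_C, Polynomial.natDegree_C]
  · rw [Polynomial.natDegree_add_eq_left_of_natDegree_lt, Polynomial.natDegree_pow]
    rw [Polynomial.natDegree_pow]
    lia

variable {c : R} {d : R[X]} {m : ℕ}

theorem odd_natDegree_C_mul_X_mul_pow (hm : Even m)
    (hne : Polynomial.C c * Polynomial.X * d ^ m ≠ 0) :
    Odd (Polynomial.C c * Polynomial.X * d ^ m).natDegree := by
  have hcX := left_ne_zero_of_mul hne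
  have hc : c ≠ 0 := Polynomial.C_ne_zero.1 (left_ne_zero_of_mul hcX)
  have : Nontrivial R := nontrivial_of_ne c 0 hc
  rw [Polynomial.natDegree_mul hcX (right_ne_zero_of_mul hne), Polynomial.natDegree_C_mul_X c hc,
    Polynomial.natDegree_pow, add_comm]
  exact (hm.mul_right _).add_one

theorem C_mul_X_mul_pow_eq_zero_of_sq_add_self_eq (hm : Even m) {s : R[X]}
    (h : s ^ 2 + s = Polynomial.C c * Polynomial.X * d ^ m) :
    Polynomial.C c * Polynomial.X * d ^ m = 0 := by
  by_contra hne
  have hodd := odd_natDegree_C_mul_X_mul_pow hm hne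
  rw [← h, natDegree_sq_add_self] at hodd
  exact Nat.not_odd_iff_even.2 (even_two_mul _) hodd

theorem natDegree_le_of_sq_add_self_eq_C_mul_X_mul_pow_add (hm : Even m) {s g : R[X]} {n : ℕ}
    (h : s ^ 2 + s = Polynomial.C c * Polynomial.X * d ^ m + g) (hg : g.natDegree ≤ 2 * n + 1) :
    s.natDegree ≤ n := by
  by_contra! hns
  have hlt : g.natDegree < (s ^ 2 + s).natDegree := by
    rw [natDegree_sq_add_self]
    lia
  have hdeg : (Polynomial.C c * Polynomial.X * d ^ m).natDegree = 2 * s.natDegree := by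
    rw [← natDegree_sq_add_self, ← Polynomial.natDegree_sub_eq_left_of_natDegree_lt hlt, h,
      add_sub_cancel_right]
  have hne : Polynomial.C c * Polynomial.X * d ^ m ≠ 0 := by
    intro h0
    rw [h0, Polynomial.natDegree_zero] at hdeg
    lia
  have hodd := odd_natDegree_C_mul_X_mul_pow hm hne
  rw [hdeg] at hodd
  exact Nat.not_odd_iff_even.2 (even_two_mul _) hodd

end Degree

section ArtinSchreier

open scoped Polynomial Polynomial.Bivariate

variable {R : Type*} [CommRing R] [IsDomain R] [CharP R 2]

theorem sq_add_self_eq_zero_iff {s : R} : s ^ 2 + s = 0 ↔ s = 0 ∨ s = 1 := by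
  rw [CharTwo.add_eq_zero, sq]
  exact IsIdempotentElem.iff_eq_zero_or_one

theorem scale_eq_one_of_sq_add_self_eq {c : R} {s d P : R[X]} (hP : P.natDegree = 7)
    (hP63 : P.coeff 6 ≠ P.coeff 3 ^ 2)
    (h : s ^ 2 + s = Polynomial.C c * Polynomial.X * d ^ 4 +
      (P + P.comp (Polynomial.C c * Polynomial.X))) : c = 1 := by
  have hs : s.natDegree ≤ 3 := by
    refine natDegree_le_of_sq_add_self_eq_C_mul_X_mul_pow_add (by decide) h
      (Polynomial.natDegree_add_le_of_degree_le hP.le ?_)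
    calc (P.comp (Polynomial.C c * Polynomial.X)).natDegree
        ≤ P.natDegree * (Polynomial.C c * Polynomial.X).natDegree := Polynomial.natDegree_comp_le
      _ ≤ 7 * 1 := Nat.mul_le_mul hP.le
          ((Polynomial.natDegree_C_mul_le c _).trans Polynomial.natDegree_X_le)
  have hcoeff (n : ℕ) (hn : ¬2 ^ 2 ∣ n) :
      (s ^ 2).coeff (n + 1) + s.coeff (n + 1) = P.coeff (n + 1) * (1 + c ^ (n + 1)) := by
    rw [← Polynomial.coeff_add, h, mul_assoc, Polynomial.coeff_add, Polynomial.coeff_C_mul,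
      Polynomial.coeff_X_mul, show 4 = 2 ^ 2 from rfl, coeff_pow_expChar_pow_of_not_dvd 2 d hn,
      mul_zero, zero_add, Polynomial.coeff_add, Polynomial.comp_C_mul_X_coeff, mul_add, mul_one]
  have hs_high (n : ℕ) (hn : 3 < n) : s.coeff n = 0 :=
    Polynomial.coeff_eq_zero_of_natDegree_lt (hs.trans_lt hn)
  have hsq_odd (n : ℕ) (hn : ¬2 ^ 1 ∣ n) : (s ^ 2).coeff n = 0 :=
    coeff_pow_expChar_pow_of_not_dvd 2 s hn
  have h7 := hcoeff 6 (by decide)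
  have h6 := hcoeff 5 (by decide)
  have h3 := hcoeff 2 (by decide)
  rw [hsq_odd 7 (by decide), hs_high 7 (by decide), add_zero] at h7
  rw [Polynomial.coeff_pow_of_natDegree_le hs (m := 2), hs_high 6 (by decide), add_zero] at h6
  rw [hsq_odd 3 (by decide), zero_add] at h3
  have hP7 : P.coeff 7 ≠ 0 := by
    rw [← hP, Polynomial.coeff_natDegree, Polynomial.leadingCoeff_ne_zero]
    rintro rfl
    simp at hP
  have hc7 : 1 = c ^ 7 :=
    CharTwo.add_eq_zero.1 ((mul_eq_zero.1 h7.symm).resolve_left hP7)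
  have hP_c6 : (P.coeff 6 - P.coeff 3 ^ 2) * (1 + c ^ 6) = 0 := by
    rw [sub_mul, ← h6, h3, mul_pow, CharTwo.add_sq]
    ring
  have hc6 : 1 = c ^ 6 :=
    CharTwo.add_eq_zero.1 ((mul_eq_zero.1 hP_c6).resolve_left (sub_ne_zero.2 hP63))
  calc c = c * c ^ 6 := by rw [← hc6, mul_one]
    _ = 1 := by rw [← pow_succ', ← hc7]

theorem eq_one_and_eq_zero_of_sq_add_self_eq {c : R} {s d P : R[X]} (hP : P.natDegree = 7)
    (hP63 : P.coeff 6 ≠ P.coeff 3 ^ 2)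
    (h : s ^ 2 + s = Polynomial.C c * Polynomial.X * d ^ 4 +
      (P + P.comp (Polynomial.C c * Polynomial.X))) : c = 1 ∧ d = 0 ∧ (s = 0 ∨ s = 1) := by
  obtain rfl := scale_eq_one_of_sq_add_self_eq hP hP63 h
  rw [Polynomial.C_1, one_mul, Polynomial.comp_X, CharTwo.add_self_eq_zero, add_zero,
    ← one_mul Polynomial.X, ← Polynomial.C_1] at h
  have hd := C_mul_X_mul_pow_eq_zero_of_sq_add_self_eq (by decide) h
  refine ⟨rfl, ?_, sq_add_self_eq_zero_iff.1 (h.trans hd)⟩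
  simpa using hd

theorem eq_zero_of_sq_add_self_eq_X_mul_Y_pow_four {u r : R[X]} {E : R[X][Y]}
    (h : E ^ 2 + E = Polynomial.C (Polynomial.X * u) * Y ^ 4 + Polynomial.C r)
    (hu : Polynomial.derivative u = 0) : u = 0 := by
  have hE : E.natDegree ≤ 2 := by
    have hdeg : (E ^ 2 + E).natDegree ≤ 4 := by
      rw [h]
      compute_degree
    rw [natDegree_sq_add_self] at hdeg
    lia
  have hcoeff := congrArg (Polynomial.coeff · (2 * 2)) h
  simp only [Polynomial.coeff_add, Polynomial.coeff_pow_of_natDegree_le hE,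
    Polynomial.coeff_eq_zero_of_natDegree_lt (p := E) (n := 2 * 2) (by lia),
    Polynomial.coeff_C_mul, Polynomial.coeff_X_pow_self,
    Polynomial.coeff_C_of_ne_zero (n := 2 * 2) (by lia), add_zero, mul_one] at hcoeff
  exact eq_zero_of_pow_char_eq_X_mul 2 hcoeff hu

/-- The polynomial `t x⁴ + P(t)` of the Artin–Schreier double plane `y² + y + t x⁴ + P(t) = 0`;
in `R[X][Y]` the variables `t` and `x` are `C X` and `Y`. -/
noncomputable def branchPoly {R : Type*} [CommRing R] (P : R[X]) : R[X][Y] :=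
  Polynomial.C Polynomial.X * Y ^ 4 + Polynomial.C P

theorem rigid_of_sq_add_self_eq_branchPoly_add {c : R} {d₁ d₂ P : R[X]} {E : R[X][Y]}
    (hP : P.natDegree = 7) (hP63 : P.coeff 6 ≠ P.coeff 3 ^ 2)
    (h : E ^ 2 + E = branchPoly P +
      (Polynomial.C (Polynomial.C c * Polynomial.X) *
          (Polynomial.C d₁ * Y + Polynomial.C d₂) ^ 4 +
        Polynomial.C (P.comp (Polynomial.C c * Polynomial.X)))) :
    c = 1 ∧ d₁ = 1 ∧ d₂ = 0 ∧ (E = 0 ∨ E = 1) := by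
  set u : R[X] := 1 + Polynomial.C c * d₁ ^ 4 with hu_def
  set r : R[X] := Polynomial.C c * Polynomial.X * d₂ ^ 4 +
    (P + P.comp (Polynomial.C c * Polynomial.X)) with hr_def
  have hur : E ^ 2 + E = Polynomial.C (Polynomial.X * u) * Y ^ 4 + Polynomial.C r := by
    rw [h, branchPoly, show 4 = 2 ^ 2 from rfl, add_pow_char_pow]
    simp only [hu_def, hr_def, map_add, map_mul, map_pow, map_one]
    ring
  have hu : u = 0 := by
    refine eq_zero_of_sq_add_self_eq_X_mul_Y_pow_four hur ?_
    have h4 : (4 : R) = 0 := by exact_mod_cast CharTwo.natCast_eq_ite 4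
    simp [hu_def, Polynomial.derivative_pow, h4]
  obtain ⟨s, rfl⟩ : ∃ s : R[X], Polynomial.C s = E := by
    rw [← Polynomial.natDegree_eq_zero]
    have hdeg := natDegree_sq_add_self E
    rw [hur, hu, mul_zero, map_zero, zero_mul, zero_add, Polynomial.natDegree_C] at hdeg
    lia
  have hs : s ^ 2 + s = r := by
    apply Polynomial.C_injective
    rw [map_add, map_pow, hur, hu, mul_zero, map_zero, zero_mul, zero_add]
  obtain ⟨rfl, hd₂, hs01⟩ := eq_one_and_eq_zero_of_sq_add_self_eq hP hP63 hs
  have hd₁ : d₁ ^ (2 ^ 2 * 1) = 1 := by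
    rw [hu_def, map_one, one_mul, CharTwo.add_eq_zero] at hu
    exact hu.symm
  rw [ExpChar.pow_prime_pow_mul_eq_one_iff, pow_one] at hd₁
  refine ⟨rfl, hd₁, hd₂, hs01.imp ?_ ?_⟩ <;> rintro rfl
  · exact map_zero _
  · exact map_one _

end ArtinSchreier

section Cover

open scoped Polynomial
open AdjoinRoot (of root)

variable {R : Type*} [CommRing R]

/-- The polynomial `y² + y + F`, whose root adjunction is the Artin–Schreier double cover
`y² + y + F = 0` of `Spec R`; the latter is free over `R` with basis `1, y`. -/
noncomputable def artinSchreierPoly (F : R) : R[X] :=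
  Polynomial.X ^ 2 + Polynomial.X + Polynomial.C F

theorem root_artinSchreierPoly (F : R) :
    root (artinSchreierPoly F) ^ 2 + root (artinSchreierPoly F) +
      of (artinSchreierPoly F) F = 0 := by
  have h : AdjoinRoot.mk (artinSchreierPoly F) (Polynomial.X ^ 2 + Polynomial.X + Polynomial.C F)
      = 0 := AdjoinRoot.mk_self
  simpa only [map_add, map_pow, AdjoinRoot.mk_X, AdjoinRoot.mk_C] using h

variable {F : R}

theorem eq_zero_of_of_mul_root_add_of_eq_zero {p q : R}
    (h : of (artinSchreierPoly F) p * root (artinSchreierPoly F) + of (artinSchreierPoly F) q = 0) :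
    p = 0 ∧ q = 0 := by
  nontriviality R
  have hmonic : (artinSchreierPoly F).Monic := by
    unfold artinSchreierPoly
    monicity!
  have hdeg : (artinSchreierPoly F).natDegree = 2 := by
    unfold artinSchreierPoly
    compute_degree!
  have hdvd : artinSchreierPoly F ∣ Polynomial.C p * Polynomial.X + Polynomial.C q := by
    rw [← AdjoinRoot.mk_eq_zero, map_add, map_mul]
    exact h
  have hlin : Polynomial.C p * Polynomial.X + Polynomial.C q = 0 := by
    by_contra hne
    refine hmonic.not_dvd_of_natDegree_lt hne ?_ hdvd
    rw [hdeg]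
    exact Polynomial.natDegree_linear_le.trans_lt one_lt_two
  exact ⟨by simpa using congrArg (Polynomial.coeff · 1) hlin,
    by simpa using congrArg (Polynomial.coeff · 0) hlin⟩

theorem coords_of_sq_add_self_add_of_eq_zero [CharP R 2] {p q G : R}
    {z : AdjoinRoot (artinSchreierPoly F)}
    (hz : z = of (artinSchreierPoly F) p * root (artinSchreierPoly F) + of (artinSchreierPoly F) q)
    (h : z ^ 2 + z + of (artinSchreierPoly F) G = 0) :
    p ^ 2 + p = 0 ∧ q ^ 2 + q = p ^ 2 * F + G := by
  subst hz
  have two_eq_zero : of (artinSchreierPoly F) 2 = 0 := by rw [CharTwo.two_eq_zero, map_zero]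
  have hlin : of (artinSchreierPoly F) (p ^ 2 + p) * root (artinSchreierPoly F) +
      of (artinSchreierPoly F) (q ^ 2 + q + (p ^ 2 * F + G)) = 0 := by
    simp only [map_add, map_mul, map_pow, map_ofNat] at h two_eq_zero ⊢
    linear_combination h - of (artinSchreierPoly F) p ^ 2 * root_artinSchreierPoly F +
      (of (artinSchreierPoly F) p ^ 2 * root (artinSchreierPoly F) +
        of (artinSchreierPoly F) p ^ 2 * of (artinSchreierPoly F) F -
        of (artinSchreierPoly F) p * of (artinSchreierPoly F) q * root (artinSchreierPoly F)) *
      two_eq_zero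
  exact (eq_zero_of_of_mul_root_add_of_eq_zero hlin).imp_right CharTwo.add_eq_zero.1

theorem map_doublePlane_relation {A : Type*} [CommRing A] [Algebra R A] (σ : A →ₐ[R] A)
    {P : R[X]} {t x y : A}
    (hrel : y ^ 2 + y + (t * x ^ 4 + Polynomial.aeval t P) = 0) {c : R} {d₁ d₂ : R[X]}
    (hσt : σ t = algebraMap R A c * t)
    (hσx : σ x = Polynomial.aeval t d₁ * x + Polynomial.aeval t d₂) :
    σ y ^ 2 + σ y + (Polynomial.aeval t (Polynomial.C c * Polynomial.X) *
        (Polynomial.aeval t d₁ * x + Polynomial.aeval t d₂) ^ 4 +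
      Polynomial.aeval t (P.comp (Polynomial.C c * Polynomial.X))) = 0 := by
  have hct : algebraMap R A c * t = Polynomial.aeval t (Polynomial.C c * Polynomial.X) := by
    rw [map_mul, Polynomial.aeval_C, Polynomial.aeval_X]
  have h := congrArg σ hrel
  rwa [map_add, map_add, map_pow, map_add, map_mul, map_pow, ← Polynomial.aeval_algHom_apply,
    hσt, hσx, map_zero, hct, ← Polynomial.aeval_comp] at h

end Cover

namespace E7A1Ring

open scoped Polynomial Polynomial.Bivariate
open AdjoinRoot (of root)

variable {k : Type*} [Field k] (a : k)

/-- The coordinate `t` of the Enriques surface. -/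
noncomputable def t : E7A1Ring k a := Ideal.Quotient.mk _ (X 0)

/-- The coordinate `x` of the Enriques surface. -/
noncomputable def x : E7A1Ring k a := Ideal.Quotient.mk _ (X 1)

/-- The coordinate `y` of the Enriques surface. -/
noncomputable def y : E7A1Ring k a := Ideal.Quotient.mk _ (X 2)

/-- The polynomial `(t + a⁴)⁷` in the equation of the Enriques surface. -/
noncomputable def septic : k[X] := (Polynomial.X + Polynomial.C (a ^ 4)) ^ 7

theorem natDegree_septic : (septic a).natDegree = 7 := by
  rw [septic, Polynomial.natDegree_pow, Polynomial.natDegree_X_add_C]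

theorem coeff_septic_six_ne_coeff_three_sq [CharP k 2] {a : k} (ha : a ≠ 0) (ha7 : a ^ 7 ≠ 1) :
    (septic a).coeff 6 ≠ (septic a).coeff 3 ^ 2 := by
  have h6 : (septic a).coeff 6 = a ^ 4 := by
    rw [septic, Polynomial.coeff_X_add_C_pow, CharTwo.natCast_eq_ite, if_neg (by decide)]
    ring
  have h3 : (septic a).coeff 3 = a ^ 16 := by
    rw [septic, Polynomial.coeff_X_add_C_pow, CharTwo.natCast_eq_ite, if_neg (by decide)]
    ring
  have ha28 : a ^ (2 ^ 2 * 7) ≠ 1 := by rwa [Ne, ExpChar.pow_prime_pow_mul_eq_one_iff]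
  rw [h6, h3]
  intro h
  refine ha28 (mul_left_cancel₀ (pow_ne_zero 4 ha) ?_)
  linear_combination -h

theorem aeval_septic (z : E7A1Ring k a) :
    Polynomial.aeval z (septic a) = (z + algebraMap k _ (a ^ 4)) ^ 7 := by
  simp [septic]

theorem relation : y a ^ 2 + y a + (t a * x a ^ 4 + Polynomial.aeval (t a) (septic a)) = 0 := by
  rw [aeval_septic, ← add_assoc]
  exact Ideal.Quotient.eq_zero_iff_mem.2 (Ideal.subset_span rfl)

/-- The polynomial `y² + y + t x⁴ + (t + a⁴)⁷` over `k[t][x]`, which presents the Enriques surface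
as an Artin–Schreier double cover of the `(t, x)`-plane. -/
noncomputable abbrev coverPoly : k[X][Y][X] := artinSchreierPoly (branchPoly (septic a))

theorem root_coverPoly :
    root (coverPoly a) ^ 2 + root (coverPoly a) +
      of (coverPoly a) (Polynomial.C Polynomial.X) * of (coverPoly a) Y ^ 4 +
      (of (coverPoly a) (Polynomial.C Polynomial.X) + algebraMap k _ (a ^ 4)) ^ 7 = 0 := by
  have hbranch : of (coverPoly a) (branchPoly (septic a)) =
      of (coverPoly a) (Polynomial.C Polynomial.X) * of (coverPoly a) Y ^ 4 +
        (of (coverPoly a) (Polynomial.C Polynomial.X) + algebraMap k _ (a ^ 4)) ^ 7 := by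
    rw [branchPoly, septic, map_add, map_mul, map_pow, map_pow, map_pow, map_add, map_add]
    rfl
  rw [add_assoc, ← hbranch]
  exact root_artinSchreierPoly _

/-- The canonical map from the coordinate ring in three variables to `k[t][x][y] / (coverPoly a)`,
which makes the basis `1, y` over `k[t][x]` available. -/
noncomputable def toCover : E7A1Ring k a →ₐ[k] AdjoinRoot (coverPoly a) :=
  Ideal.Quotient.liftₐ _
    (MvPolynomial.aeval
      ![of (coverPoly a) (Polynomial.C Polynomial.X), of (coverPoly a) Y, root (coverPoly a)])
    fun _ hp ↦ (Ideal.span_singleton_le_iff_mem (RingHom.ker _)).2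
      (by simpa [RingHom.mem_ker] using root_coverPoly a) hp

theorem toCover_mk (p : MvPolynomial (Fin 3) k) :
    toCover a (Ideal.Quotient.mk _ p) = MvPolynomial.aeval
      ![of (coverPoly a) (Polynomial.C Polynomial.X), of (coverPoly a) Y, root (coverPoly a)] p :=
  rfl

theorem toCover_t : toCover a (t a) = of (coverPoly a) (Polynomial.C Polynomial.X) := by
  rw [t, toCover_mk, MvPolynomial.aeval_X]
  rfl

theorem toCover_x : toCover a (x a) = of (coverPoly a) Y := by
  rw [x, toCover_mk, MvPolynomial.aeval_X]
  rfl

theorem toCover_y : toCover a (y a) = root (coverPoly a) := by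
  rw [y, toCover_mk, MvPolynomial.aeval_X]
  rfl

theorem toCover_aeval_t (p : k[X]) :
    toCover a (Polynomial.aeval (t a) p) = of (coverPoly a) (Polynomial.C p) := by
  have hcomp : (toCover a).comp (Polynomial.aeval (t a)) =
      (AdjoinRoot.ofAlgHom k (coverPoly a)).comp Polynomial.CAlgHom := by
    ext
    simp [toCover_t]
  exact DFunLike.congr_fun hcomp p

theorem toCover_aeval_t_x (p : MvPolynomial (Fin 2) k) :
    toCover a (MvPolynomial.aeval ![t a, x a] p) =
      of (coverPoly a) ((Polynomial.Bivariate.equivMvPolynomial k).symm p) := by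
  have hcomp : (toCover a).comp (MvPolynomial.aeval ![t a, x a]) =
      (AdjoinRoot.ofAlgHom k (coverPoly a)).comp
        (Polynomial.Bivariate.equivMvPolynomial k).symm.toAlgHom := by
    ext i
    fin_cases i <;> simp [toCover_t, toCover_x]
  exact DFunLike.congr_fun hcomp p

variable {a} in
theorem toCover_sq_add_self_add_eq_zero {z : E7A1Ring k a} {d₁ d₂ q r : k[X]}
    (h : z ^ 2 + z + (Polynomial.aeval (t a) q *
      (Polynomial.aeval (t a) d₁ * x a + Polynomial.aeval (t a) d₂) ^ 4 +
        Polynomial.aeval (t a) r) = 0) :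
    toCover a z ^ 2 + toCover a z + of (coverPoly a)
      (Polynomial.C q * (Polynomial.C d₁ * Y + Polynomial.C d₂) ^ 4 + Polynomial.C r) = 0 := by
  have hmap := congrArg (toCover a) h
  simpa only [map_add, map_mul, map_pow, map_zero, toCover_aeval_t, toCover_x] using hmap

end E7A1Ring

open scoped Polynomial in
theorem E7A1_supersingular_aut_general {k : Type*} [Field k] [CharP k 2]
    {a : k} (ha : a ≠ 0) (ha7 : a ^ 7 ≠ 1) {c₁ : k} {d₁ d₂ : k[X]}
    {e₁ e₂ : MvPolynomial (Fin 2) k} (he₁ : e₁ ≠ 0) (σ : E7A1Ring k a →ₐ[k] E7A1Ring k a)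
    (hσt : σ (E7A1Ring.t a) = algebraMap k (E7A1Ring k a) c₁ * E7A1Ring.t a)
    (hσx : σ (E7A1Ring.x a) =
      Polynomial.aeval (E7A1Ring.t a) d₁ * E7A1Ring.x a + Polynomial.aeval (E7A1Ring.t a) d₂)
    (hσy : σ (E7A1Ring.y a) =
      MvPolynomial.aeval ![E7A1Ring.t a, E7A1Ring.x a] e₁ * E7A1Ring.y a +
        MvPolynomial.aeval ![E7A1Ring.t a, E7A1Ring.x a] e₂) :
    c₁ = 1 ∧ d₁ = 1 ∧ d₂ = 0 ∧ e₁ = 1 ∧ (e₂ = 0 ∨ e₂ = 1) := by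
  let φ := (Polynomial.Bivariate.equivMvPolynomial k).symm
  have hσy_cover := congrArg (E7A1Ring.toCover a) hσy
  rw [map_add, map_mul, E7A1Ring.toCover_aeval_t_x, E7A1Ring.toCover_aeval_t_x,
    E7A1Ring.toCover_y] at hσy_cover
  have hrel := map_doublePlane_relation σ (E7A1Ring.relation a) hσt hσx
  obtain ⟨hφe₁_sq, hφe₂⟩ := coords_of_sq_add_self_add_of_eq_zero hσy_cover
    (E7A1Ring.toCover_sq_add_self_add_eq_zero hrel)
  have hφe₁ : φ e₁ = 1 :=
    (sq_add_self_eq_zero_iff.1 hφe₁_sq).resolve_left (φ.map_ne_zero_iff.2 he₁)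
  rw [hφe₁, one_pow, one_mul] at hφe₂
  obtain ⟨hc₁, hd₁, hd₂, hφe₂⟩ := rigid_of_sq_add_self_eq_branchPoly_add
    (E7A1Ring.natDegree_septic a) (E7A1Ring.coeff_septic_six_ne_coeff_three_sq ha ha7) hφe₂
  exact ⟨hc₁, hd₁, hd₂, φ.map_eq_one_iff.1 hφe₁,
    hφe₂.imp φ.map_eq_zero_iff.1 φ.map_eq_one_iff.1⟩

/-- Any `k`-algebra automorphism of `A = k[t,x,y]/(y² + y + tx⁴ + (t+a⁴)⁷)` (with
`a ≠ 0`, `a⁷ ≠ 1`) of the form `t ↦ c₁t`, `x ↦ d₁(t)x + d₂(t)`, `y ↦ e₁(t,x)y + e₂(t,x)`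
with `c₁ ≠ 0`, `d₁ ≢ 0`, `e₁ ≢ 0` satisfies `c₁ = 1`, `d₁ = 1`, `d₂ = 0`, `e₁ = 1` and
`e₂ ∈ {0, 1}`: the group of such automorphisms is `ℤ/2ℤ`, generated by `y ↦ y + 1`. -/
theorem E7A1_supersingular_aut (k : Type*) [Field k] [IsAlgClosed k] [CharP k 2]
    (a : k) (ha : a ≠ 0) (ha7 : a ^ 7 ≠ 1)
    (c1 : k) (d1 d2 : Polynomial k) (e1 e2 : MvPolynomial (Fin 2) k)
    (hc1 : c1 ≠ 0) (hd1 : d1 ≠ 0) (he1 : e1 ≠ 0)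
    (σ : E7A1Ring k a ≃ₐ[k] E7A1Ring k a)
    (T : E7A1Ring k a) (Xx : E7A1Ring k a) (Yy : E7A1Ring k a)
    (hT : T = Ideal.Quotient.mk _ (X 0))
    (hX : Xx = Ideal.Quotient.mk _ (X 1))
    (hY : Yy = Ideal.Quotient.mk _ (X 2))
    (hσt : σ T = algebraMap k (E7A1Ring k a) c1 * T)
    (hσx : σ Xx = Polynomial.aeval T d1 * Xx + Polynomial.aeval T d2)
    (hσy : σ Yy = MvPolynomial.aeval ![T, Xx] e1 * Yy + MvPolynomial.aeval ![T, Xx] e2) :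
    c1 = 1 ∧ d1 = 1 ∧ d2 = 0 ∧ e1 = 1 ∧ (e2 = 0 ∨ e2 = 1) := by
  subst hT hX hY
  exact E7A1_supersingular_aut_general ha ha7 he1 (σ : E7A1Ring k a →ₐ[k] E7A1Ring k a) hσt hσx hσy
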